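/- arXiv:math/0101251 — 2 statements merged into one kernel-verified Lean document; each statement's English description precedes it below -/
import Mathlib

section
/- Suppose c is odd. Then (S₁^d S₃^{−1})² = T, the group G is isomorphic to the product of cyclic groups C_{4b} × C₄ (with the two factors generated by S₁ and S₁^d S₃^{−1}), and the only non-identity elements of G having at least two diagonal entries equal to 1 are T = diag(−1,−1,1,1) and −T = diag(1,1,−1,−1). -/
/-!
Since `ω ^ (2 * b) = -1`, every element of `G` is a diagonal matrix of powers of `ω`, and
identities in `G` become congruences modulo `4 * b` between exponents. Put `r = S₁ ^ d * S₃⁻¹`.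
The relation `a * d = b * c + 1` turns the top left entries of `r` into `± ω ^ (b * c)`, so for odd
`c` one gets `r ^ 2 = T`. Moreover `S₁` and `r` generate `G`, because `S₁ * S₂⁻¹ = T`,
`S₃ * S₄⁻¹ = -T` and `-T = S₁ ^ (2 * b) * r ^ (2 * a)`.

The exponents of the four entries of `S₁ ^ m * r ^ n` are linear forms in `m` and `n`. If two of
them vanish modulo `4 * b`, then `2 * b ∣ m` and `2 ∣ n`, which leaves only block sign matrices.
-/

section CyclicProduct

variable {G : Type*} [Group G]

theorem mem_closure_pair_iff_of_commute {x y z : G} (hxy : Commute x y) :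
    z ∈ Subgroup.closure {x, y} ↔ ∃ m n : ℤ, x ^ m * y ^ n = z := by
  have hcomm (m n : Multiplicative ℤ) : Commute (zpowersHom G x m) (zpowersHom G y n) :=
    hxy.zpow_zpow _ _
  rw [Set.insert_eq, Subgroup.closure_union, ← Subgroup.zpowers_eq_closure,
    ← Subgroup.zpowers_eq_closure, ← Subgroup.range_zpowersHom, ← Subgroup.range_zpowersHom,
    ← MonoidHom.noncommCoprod_range _ _ hcomm]
  simp [MonoidHom.mem_range, Multiplicative.exists, Prod.exists]

theorem orderOf_eq_of_zpow_eq_one_iff {x : G} {N : ℕ}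
    (hx : ∀ m : ℤ, x ^ m = 1 ↔ (N : ℤ) ∣ m) : orderOf x = N := by
  refine Nat.dvd_antisymm (orderOf_dvd_of_pow_eq_one ?_) (Int.natCast_dvd_natCast.1 ?_)
  · simpa using (hx N).2 dvd_rfl
  · exact (hx _).1 (by simp [pow_orderOf_eq_one])

/-- The internal direct product of two subgroups that commute elementwise and meet trivially. -/
noncomputable def prodMulEquivSup {H K : Subgroup G}
    (hcomm : ∀ (u : H) (v : K), Commute (H.subtype u) (K.subtype v)) (hdisj : Disjoint H K) :
    H × K ≃* (H ⊔ K : Subgroup G) :=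
  (MonoidHom.ofInjective ((MonoidHom.noncommCoprod_injective H.subtype K.subtype hcomm).2
    ⟨H.subtype_injective, K.subtype_injective, by simpa using hdisj⟩)).trans
    (MulEquiv.subgroupCongr (by
      rw [MonoidHom.noncommCoprod_range, H.range_subtype, K.range_subtype]))

theorem coe_prodMulEquivSup {H K : Subgroup G}
    (hcomm : ∀ (u : H) (v : K), Commute (H.subtype u) (K.subtype v)) (hdisj : Disjoint H K)
    (p : H × K) : (prodMulEquivSup hcomm hdisj p : G) = p.1 * p.2 :=
  rfl

/-- The identification of `C_N` with the cyclic subgroup generated by an element `x` of order `N`,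
sending `1` to `x`. -/
noncomputable def zmodMulEquivZPowers {x : G} {N : ℕ} (hx : orderOf x = N) :
    Multiplicative (ZMod N) ≃* Subgroup.zpowers x :=
  zmodMulEquivOfGenerator (g := ⟨x, Subgroup.mem_zpowers x⟩)
    (by rintro ⟨_, m, rfl⟩; exact ⟨m, by ext; simp⟩) ((Nat.card_zpowers x).trans hx)

theorem coe_zmodMulEquivZPowers_ofAdd_one {x : G} {N : ℕ} (hx : orderOf x = N) :
    (zmodMulEquivZPowers hx (Multiplicative.ofAdd 1) : G) = x := by
  simp [zmodMulEquivZPowers]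

theorem disjoint_zpowers_of_zpow_mul_zpow_eq_one {x y : G}
    (h : ∀ m n : ℤ, x ^ m * y ^ n = 1 → x ^ m = 1) :
    Disjoint (Subgroup.zpowers x) (Subgroup.zpowers y) := by
  rw [Subgroup.disjoint_def]
  rintro _ ⟨m, rfl⟩ ⟨n, hn⟩
  exact h m (-n) (by simp_all)

theorem exists_mulEquiv_closure_pair {x y : G} (hxy : Commute x y) {M N : ℕ}
    (hrel : ∀ m n : ℤ, x ^ m * y ^ n = 1 ↔ (M : ℤ) ∣ m ∧ (N : ℤ) ∣ n) :
    ∃ φ : Multiplicative (ZMod M) × Multiplicative (ZMod N) ≃* Subgroup.closure {x, y},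
      (φ (Multiplicative.ofAdd 1, 1) : G) = x ∧ (φ (1, Multiplicative.ofAdd 1) : G) = y := by
  have hxM (m : ℤ) : x ^ m = 1 ↔ (M : ℤ) ∣ m := by simpa using hrel m 0
  have hyN (n : ℤ) : y ^ n = 1 ↔ (N : ℤ) ∣ n := by simpa using hrel 0 n
  have hdisj := disjoint_zpowers_of_zpow_mul_zpow_eq_one fun m n h =>
    (hxM m).2 ((hrel m n).1 h).1
  have hcomm (u : Subgroup.zpowers x) (v : Subgroup.zpowers y) :
      Commute ((Subgroup.zpowers x).subtype u) ((Subgroup.zpowers y).subtype v) := by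
    obtain ⟨⟨_, m, rfl⟩, ⟨_, n, rfl⟩⟩ := u, v
    exact hxy.zpow_zpow m n
  have hsup : Subgroup.zpowers x ⊔ Subgroup.zpowers y = Subgroup.closure {x, y} := by
    rw [Subgroup.zpowers_eq_closure, Subgroup.zpowers_eq_closure, ← Subgroup.closure_union,
      Set.insert_eq]
  refine ⟨((zmodMulEquivZPowers (orderOf_eq_of_zpow_eq_one_iff hxM)).prodCongr
    (zmodMulEquivZPowers (orderOf_eq_of_zpow_eq_one_iff hyN))).trans
    ((prodMulEquivSup hcomm hdisj).trans (MulEquiv.subgroupCongr hsup)), ?_, ?_⟩ <;>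
  simp [coe_prodMulEquivSup, MulEquiv.prodCongr, coe_zmodMulEquivZPowers_ofAdd_one]

end CyclicProduct

section DiagPow

variable {ι R : Type*} [Fintype ι] [DecidableEq ι] [CommRing R]

/-- The invertible diagonal matrix whose `k`-th diagonal entry is `w ^ e k`. -/
def diagPow (w : Rˣ) (e : ι → ℤ) : (Matrix ι ι R)ˣ :=
  Units.map (Matrix.diagonalRingHom ι R).toMonoidHom
    (MulEquiv.piUnits.symm fun k => w ^ e k)

theorem coe_diagPow (w : Rˣ) (e : ι → ℤ) :
    (diagPow w e : Matrix ι ι R) = Matrix.diagonal fun k => ((w ^ e k : Rˣ) : R) :=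
  rfl

theorem diagPow_add (w : Rˣ) (e f : ι → ℤ) :
    diagPow w (e + f) = diagPow w e * diagPow w f := by
  ext1
  simp [coe_diagPow, zpow_add]

theorem diagPow_neg (w : Rˣ) (e : ι → ℤ) : diagPow w (-e) = (diagPow w e)⁻¹ :=
  eq_inv_of_mul_eq_one_left <| by
    ext1
    simp [← diagPow_add, coe_diagPow]

theorem diagPow_sub (w : Rˣ) (e f : ι → ℤ) :
    diagPow w (e - f) = diagPow w e * (diagPow w f)⁻¹ := by
  rw [sub_eq_add_neg, diagPow_add, diagPow_neg]

theorem diagPow_zsmul (w : Rˣ) (m : ℤ) (e : ι → ℤ) : diagPow w (m • e) = diagPow w e ^ m :=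
  map_zpow (MonoidHom.mk' (fun v : Multiplicative (ι → ℤ) => diagPow w v.toAdd) fun u v =>
    diagPow_add w u.toAdd v.toAdd) (Multiplicative.ofAdd e) m

theorem diagPow_zpow_left (w : Rˣ) (m : ℤ) (e : ι → ℤ) :
    diagPow (w ^ m) e = diagPow w (m • e) := by
  ext1
  simp [coe_diagPow, zpow_mul]

theorem commute_diagPow (w : Rˣ) (e f : ι → ℤ) : Commute (diagPow w e) (diagPow w f) := by
  rw [Commute, SemiconjBy, ← diagPow_add, ← diagPow_add, add_comm]

theorem diagPow_apply_self_eq_one_iff {w : Rˣ} {N : ℕ} (hw : IsPrimitiveRoot w N) (e : ι → ℤ)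
    (k : ι) : (diagPow w e : Matrix ι ι R) k k = 1 ↔ (N : ℤ) ∣ e k := by
  rw [coe_diagPow, Matrix.diagonal_apply_eq, Units.val_eq_one, hw.zpow_eq_one_iff_dvd]

theorem diagPow_eq_one_iff {w : Rˣ} {N : ℕ} (hw : IsPrimitiveRoot w N) (e : ι → ℤ) :
    diagPow w e = 1 ↔ ∀ k, (N : ℤ) ∣ e k := by
  rw [← Units.val_inj, coe_diagPow, Units.val_one, Matrix.diagonal_eq_one, funext_iff]
  simp [← hw.zpow_eq_one_iff_dvd]

theorem diagPow_eq_iff {w : Rˣ} {N : ℕ} (hw : IsPrimitiveRoot w N) (e f : ι → ℤ) :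
    diagPow w e = diagPow w f ↔ ∀ k, (e k : ZMod N) = f k := by
  rw [← mul_inv_eq_one, ← diagPow_sub, diagPow_eq_one_iff hw]
  simp only [Pi.sub_apply, ← ZMod.intCast_zmod_eq_zero_iff_dvd, Int.cast_sub, sub_eq_zero]

end DiagPow

section Divisibility

/-- The exponents of `w` in the diagonal entries of `S₁ ^ m * (S₁ ^ d * S₃⁻¹) ^ n`, where
`a * d = b * c + 1` and `w ^ (2 * b) = -1`. -/
def wordExponents (a b c d m n : ℤ) : Fin 4 → ℤ :=
  ![a * m + b * c * n + 2 * b * (m + d * n), a * m + b * c * n, m + 2 * b * n, m]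

variable {a b c d m n : ℤ}

theorem dvd_of_mul_dvd_add {k : ℤ} (hb : b ≠ 0) (hkc : IsCoprime k c) (hm : k * b ∣ m)
    (h : k * b ∣ a * m + b * c * n) : k ∣ n := by
  have hbcn : b * k ∣ b * (c * n) := by
    rw [mul_comm b k, ← mul_assoc]
    exact (dvd_add_right (hm.mul_left a)).1 h
  exact hkc.dvd_of_dvd_mul_left (Int.dvd_of_mul_dvd_mul_left hb hbcn)

theorem two_mul_dvd_of_four_mul_dvd (hb : b ≠ 0) (hdet : a * d = b * c + 1)
    (h₀ : 4 * b ∣ a * m + b * c * n + 2 * b * (m + d * n))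
    (h₁ : 4 * b ∣ a * m + b * c * n) : 2 * b ∣ m := by
  have hsum : 2 * b * 2 ∣ 2 * b * (m + d * n) := by
    rw [show 2 * b * 2 = 4 * b by ring]
    exact (dvd_add_right h₁).1 h₀
  obtain ⟨p, hp⟩ := Int.dvd_of_mul_dvd_mul_left (by simpa) hsum
  obtain ⟨q, hq⟩ := h₁
  exact ⟨2 * d * q - c * p, by linear_combination d * hq - b * c * hp - m * hdet⟩

theorem two_mul_dvd_and_two_dvd_of_dvd_wordExponents (hb : b ≠ 0) (hdet : a * d = b * c + 1)
    (hc : Odd c) {i j : Fin 4} (hij : i ≠ j) (hi : 4 * b ∣ wordExponents a b c d m n i)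
    (hj : 4 * b ∣ wordExponents a b c d m n j) : 2 * b ∣ m ∧ 2 ∣ n := by
  set e := wordExponents a b c d m n
  have h24 : 2 * b ∣ 4 * b := ⟨2, by ring⟩
  have hcop : IsCoprime 2 c := Int.isCoprime_two_left.2 hc
  have hleft : 4 * b ∣ e 0 ∨ 4 * b ∣ e 1 → 2 * b ∣ a * m + b * c * n := by
    rintro (h | h)
    · exact (dvd_add_left (dvd_mul_right _ _)).1 (h24.trans h)
    · exact h24.trans h
  have hright : 4 * b ∣ e 2 ∨ 4 * b ∣ e 3 → 2 * b ∣ m := by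
    rintro (h | h)
    · exact (dvd_add_left (dvd_mul_right _ _)).1 (h24.trans h)
    · exact h24.trans h
  have hcases : (4 * b ∣ e 0 ∧ 4 * b ∣ e 1) ∨ (4 * b ∣ e 2 ∧ 4 * b ∣ e 3) ∨
      ((4 * b ∣ e 0 ∨ 4 * b ∣ e 1) ∧ (4 * b ∣ e 2 ∨ 4 * b ∣ e 3)) := by
    fin_cases i <;> fin_cases j <;> simp_all
  rcases hcases with ⟨h₀, h₁⟩ | ⟨h₂, h₃⟩ | ⟨h, h'⟩
  · have hm : 2 * b ∣ m := two_mul_dvd_of_four_mul_dvd hb hdet h₀ h₁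
    exact ⟨hm, dvd_of_mul_dvd_add hb hcop hm (hleft (Or.inl h₀))⟩
  · have hbn : 2 * b * 2 ∣ 2 * b * n := by
      rw [show 2 * b * 2 = 4 * b by ring]
      exact (dvd_add_right h₃).1 h₂
    exact ⟨hright (Or.inl h₂), Int.dvd_of_mul_dvd_mul_left (by simpa) hbn⟩
  · exact ⟨hright h', dvd_of_mul_dvd_add hb hcop (hright h') (hleft h)⟩

end Divisibility

section Generators

variable {R : Type*} [CommRing R]

theorem zpow_two_mul_eq_neg_one [NoZeroDivisors R] {b : ℕ} (hb : 0 < b) {w : Rˣ}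
    (hw : IsPrimitiveRoot w (4 * b)) : w ^ (2 * b : ℤ) = -1 := by
  have hsq : IsPrimitiveRoot ((w : R) ^ (2 * b)) 2 :=
    (IsPrimitiveRoot.coe_units_iff.2 hw).pow (by positivity) (by ring)
  have hpow : w ^ (2 * b) = -1 := Units.ext (by simpa using hsq.eq_neg_one_of_two_right)
  exact_mod_cast hpow

/-- `S₁` as a diagonal matrix of powers of `w`, where `w ^ (2 * b) = -1`. -/
def gen₁ (w : Rˣ) (a b : ℤ) : (Matrix (Fin 4) (Fin 4) R)ˣ :=
  diagPow w ![a + 2 * b, a, 1, 1]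

/-- `S₂` as a diagonal matrix of powers of `w`, where `w ^ (2 * b) = -1`. -/
def gen₂ (w : Rˣ) (a b : ℤ) : (Matrix (Fin 4) (Fin 4) R)ˣ :=
  diagPow w ![a, a + 2 * b, 1, 1]

/-- `S₃` as a diagonal matrix of powers of `w`, where `w ^ (2 * b) = -1`. -/
def gen₃ (w : Rˣ) (b d : ℤ) : (Matrix (Fin 4) (Fin 4) R)ˣ :=
  diagPow w ![1, 1, d + 2 * b, d]

/-- `S₄` as a diagonal matrix of powers of `w`, where `w ^ (2 * b) = -1`. -/
def gen₄ (w : Rˣ) (b d : ℤ) : (Matrix (Fin 4) (Fin 4) R)ˣ :=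
  diagPow w ![1, 1, d, d + 2 * b]

theorem coe_gen₁ {w : Rˣ} {b : ℤ} (hneg : w ^ (2 * b) = -1) (a : ℕ) :
    (gen₁ w a b : Matrix (Fin 4) (Fin 4) R) =
      Matrix.diagonal ![-(w : R) ^ a, (w : R) ^ a, w, w] := by
  rw [gen₁, coe_diagPow]
  congr 1
  ext k
  fin_cases k <;> simp [zpow_add, hneg]

theorem coe_gen₂ {w : Rˣ} {b : ℤ} (hneg : w ^ (2 * b) = -1) (a : ℕ) :
    (gen₂ w a b : Matrix (Fin 4) (Fin 4) R) =
      Matrix.diagonal ![(w : R) ^ a, -(w : R) ^ a, w, w] := by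
  rw [gen₂, coe_diagPow]
  congr 1
  ext k
  fin_cases k <;> simp [zpow_add, hneg]

theorem coe_gen₃ {w : Rˣ} {b : ℤ} (hneg : w ^ (2 * b) = -1) (d : ℕ) :
    (gen₃ w b d : Matrix (Fin 4) (Fin 4) R) =
      Matrix.diagonal ![(w : R), w, -(w : R) ^ d, (w : R) ^ d] := by
  rw [gen₃, coe_diagPow]
  congr 1
  ext k
  fin_cases k <;> simp [zpow_add, hneg]

theorem coe_gen₄ {w : Rˣ} {b : ℤ} (hneg : w ^ (2 * b) = -1) (d : ℕ) :
    (gen₄ w b d : Matrix (Fin 4) (Fin 4) R) =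
      Matrix.diagonal ![(w : R), w, (w : R) ^ d, -(w : R) ^ d] := by
  rw [gen₄, coe_diagPow]
  congr 1
  ext k
  fin_cases k <;> simp [zpow_add, hneg]

/-- `S₁ ^ d * S₃⁻¹` as a diagonal matrix of powers of `w`. -/
def rootT (w : Rˣ) (b c d : ℤ) : (Matrix (Fin 4) (Fin 4) R)ˣ :=
  diagPow w ![b * c + 2 * b * d, b * c, 2 * b, 0]

/-- The diagonal matrix with entries `(-1) ^ p, (-1) ^ p, (-1) ^ q, (-1) ^ q`. Thus `T` is
`blockSign R 1 0` and `-T` is `blockSign R 0 1`. -/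
def blockSign (R : Type*) [CommRing R] (p q : ℤ) : (Matrix (Fin 4) (Fin 4) R)ˣ :=
  diagPow (-1) ![p, p, q, q]

theorem coe_blockSign (p q : ℤ) : (blockSign R p q : Matrix (Fin 4) (Fin 4) R) =
    Matrix.diagonal
      ![(((-1) ^ p : Rˣ) : R), ((-1) ^ p : Rˣ), ((-1) ^ q : Rˣ), ((-1) ^ q : Rˣ)] := by
  rw [blockSign, coe_diagPow]
  congr 1
  ext k
  fin_cases k <;> rfl

theorem coe_blockSign_one_zero : (blockSign R 1 0 : Matrix (Fin 4) (Fin 4) R) =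
    Matrix.diagonal ![-1, -1, 1, 1] := by
  simp [coe_blockSign]

theorem coe_blockSign_zero_one : (blockSign R 0 1 : Matrix (Fin 4) (Fin 4) R) =
    Matrix.diagonal ![1, 1, -1, -1] := by
  simp [coe_blockSign]

theorem blockSign_congr {p q p' q' : ℤ} (hp : Even (p - p')) (hq : Even (q - q')) :
    blockSign R p q = blockSign R p' q' := by
  have hsign {s t : ℤ} (h : Even (s - t)) : (-1 : Rˣ) ^ s = (-1) ^ t := by
    rw [← mul_inv_eq_one, ← zpow_sub, h.neg_one_zpow]
  ext1
  rw [coe_blockSign, coe_blockSign, hsign hp, hsign hq]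

theorem blockSign_zero_zero : blockSign R 0 0 = 1 := by
  ext1
  rw [coe_blockSign, Units.val_one, Matrix.diagonal_eq_one]
  ext k
  fin_cases k <;> simp

theorem diagPow_eq_blockSign [NoZeroDivisors R] {b : ℕ} (hb : 0 < b) {w : Rˣ}
    (hw : IsPrimitiveRoot w (4 * b)) {e : Fin 4 → ℤ} {p q : ℤ}
    (he : ∀ k, (e k : ZMod (4 * b)) = (2 * b * ![p, p, q, q] k : ℤ)) :
    diagPow w e = blockSign R p q := by
  rw [blockSign, ← zpow_two_mul_eq_neg_one hb hw, diagPow_zpow_left, diagPow_eq_iff hw]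
  exact he

theorem gen₁_zpow_mul_rootT_zpow (w : Rˣ) (a b c d m n : ℤ) :
    gen₁ w a b ^ m * rootT w b c d ^ n = diagPow w (wordExponents a b c d m n) := by
  have hexp : m • ![a + 2 * b, a, 1, 1] + n • ![b * c + 2 * b * d, b * c, 2 * b, 0] =
      wordExponents a b c d m n := by
    simp only [wordExponents, Matrix.smul_cons, Matrix.smul_empty, Matrix.cons_add_cons,
      Matrix.empty_add_empty, smul_eq_mul]
    ring_nf
  rw [gen₁, rootT, ← diagPow_zsmul, ← diagPow_zsmul, ← diagPow_add, hexp]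

theorem commute_gen₁_rootT (w : Rˣ) (a b c d : ℤ) : Commute (gen₁ w a b) (rootT w b c d) :=
  commute_diagPow w _ _

theorem four_mul_natCast_eq_zero (b : ℕ) : (4 * b : ZMod (4 * b)) = 0 := by
  exact_mod_cast ZMod.natCast_self (4 * b)

theorem neg_two_mul_natCast (b : ℕ) : (-(2 * b) : ZMod (4 * b)) = 2 * b := by
  linear_combination -four_mul_natCast_eq_zero b

theorem gen₁_zpow_mul_gen₃_inv {a c d : ℤ} {b : ℕ} (hdet : a * d = b * c + 1) {w : Rˣ}
    (hw : IsPrimitiveRoot w (4 * b)) : gen₁ w a b ^ d * (gen₃ w b d)⁻¹ = rootT w b c d := by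
  rw [gen₁, gen₃, rootT, ← diagPow_zsmul, ← diagPow_sub, diagPow_eq_iff hw]
  have hdet' : (a * d : ZMod (4 * b)) = b * c + 1 := mod_cast congrArg Int.cast hdet
  have h₀ : (d * (a + 2 * b) - 1 : ZMod (4 * b)) = b * c + 2 * b * d := by
    linear_combination hdet'
  have h₁ : (d * a - 1 : ZMod (4 * b)) = b * c := by linear_combination hdet'
  intro k
  fin_cases k <;> [simpa using h₀; simpa using h₁; simp [neg_two_mul_natCast]; simp]

variable [NoZeroDivisors R] {b : ℕ} {w : Rˣ}

theorem gen₁_zpow_mul_rootT_zpow_eq_blockSign (hb : 0 < b) (hw : IsPrimitiveRoot w (4 * b))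
    (a c d p q : ℤ) :
    gen₁ w a b ^ (2 * b * p) * rootT w b c d ^ (2 * q) = blockSign R (a * p + c * q) p := by
  rw [gen₁_zpow_mul_rootT_zpow]
  refine diagPow_eq_blockSign hb hw fun k => ?_
  have h4b := four_mul_natCast_eq_zero b
  have h₀ : (a * (2 * b * p) + b * c * (2 * q) + 2 * b * (2 * b * p + d * (2 * q)) :
      ZMod (4 * b)) = 2 * b * (a * p + c * q) := by
    linear_combination (b * p + d * q) * h4b
  have h₁ : (a * (2 * b * p) + b * c * (2 * q) : ZMod (4 * b)) = 2 * b * (a * p + c * q) := by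
    ring
  have h₂ : (2 * b * p + 2 * b * (2 * q) : ZMod (4 * b)) = 2 * b * p := by
    linear_combination q * h4b
  fin_cases k <;> [simpa [wordExponents] using h₀; simpa [wordExponents] using h₁;
    simpa [wordExponents] using h₂; simp [wordExponents]]

theorem gen₁_mul_gen₂_inv (hb : 0 < b) (hw : IsPrimitiveRoot w (4 * b)) (a : ℤ) :
    gen₁ w a b * (gen₂ w a b)⁻¹ = blockSign R 1 0 := by
  rw [gen₁, gen₂, ← diagPow_sub]
  refine diagPow_eq_blockSign hb hw fun k => ?_
  fin_cases k <;> simp [neg_two_mul_natCast]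

theorem gen₃_mul_gen₄_inv (hb : 0 < b) (hw : IsPrimitiveRoot w (4 * b)) (d : ℤ) :
    gen₃ w b d * (gen₄ w b d)⁻¹ = blockSign R 0 1 := by
  rw [gen₃, gen₄, ← diagPow_sub]
  refine diagPow_eq_blockSign hb hw fun k => ?_
  fin_cases k <;> simp [neg_two_mul_natCast]

theorem rootT_sq (hb : 0 < b) (hw : IsPrimitiveRoot w (4 * b)) {c : ℤ} (hc : Odd c) (d : ℤ) :
    rootT w b c d ^ 2 = blockSign R 1 0 := by
  have h := gen₁_zpow_mul_rootT_zpow_eq_blockSign hb hw 0 c d 0 1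
  simp only [mul_zero, zpow_zero, one_mul, mul_one, zero_add] at h
  exact_mod_cast h.trans (blockSign_congr (hc.sub_odd odd_one) (by simp))

theorem gen₁_zpow_mul_rootT_zpow_eq_blockSign_zero_one (hb : 0 < b)
    (hw : IsPrimitiveRoot w (4 * b)) {c : ℤ} (hc : Odd c) (a d : ℤ) :
    gen₁ w a b ^ (2 * b : ℤ) * rootT w b c d ^ (2 * a) = blockSign R 0 1 := by
  have h := gen₁_zpow_mul_rootT_zpow_eq_blockSign hb hw a c d 1 a
  rw [mul_one] at h
  refine h.trans (blockSign_congr ?_ (by simp))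
  rw [show a * 1 + c * a - 0 = (c + 1) * a by ring]
  exact hc.add_one.mul_right a

theorem closure_generators_eq (hb : 0 < b) (hw : IsPrimitiveRoot w (4 * b)) {a c d : ℤ}
    (hdet : a * d = b * c + 1) (hc : Odd c) :
    Subgroup.closure {gen₁ w a b, gen₂ w a b, gen₃ w b d, gen₄ w b d} =
      Subgroup.closure {gen₁ w a b, rootT w b c d} := by
  have hroot := gen₁_zpow_mul_gen₃_inv hdet hw
  apply le_antisymm <;> rw [Subgroup.closure_le]
  · set H := Subgroup.closure {gen₁ w a b, rootT w b c d}
    have h₁ : gen₁ w a b ∈ H := Subgroup.subset_closure (by simp)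
    have hr : rootT w b c d ∈ H := Subgroup.subset_closure (by simp)
    have h₂ : gen₂ w a b ∈ H := by
      rw [← inv_mem_iff, ← Subgroup.mul_mem_cancel_left H h₁, gen₁_mul_gen₂_inv hb hw,
        ← rootT_sq hb hw hc d]
      exact pow_mem hr 2
    have h₃ : gen₃ w b d ∈ H := by
      rwa [← inv_mem_iff, ← Subgroup.mul_mem_cancel_left H (zpow_mem h₁ d), hroot]
    have h₄ : gen₄ w b d ∈ H := by
      rw [← inv_mem_iff, ← Subgroup.mul_mem_cancel_left H h₃, gen₃_mul_gen₄_inv hb hw,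
        ← gen₁_zpow_mul_rootT_zpow_eq_blockSign_zero_one hb hw hc a d]
      exact mul_mem (zpow_mem h₁ _) (zpow_mem hr _)
    simp [Set.insert_subset_iff, h₁, h₂, h₃, h₄]
  · set H := Subgroup.closure {gen₁ w a b, gen₂ w a b, gen₃ w b d, gen₄ w b d}
    have h₁ : gen₁ w a b ∈ H := Subgroup.subset_closure (by simp)
    have h₃ : gen₃ w b d ∈ H := Subgroup.subset_closure (by simp)
    have hr : rootT w b c d ∈ H := hroot ▸ mul_mem (zpow_mem h₁ d) (inv_mem h₃)
    simp [Set.insert_subset_iff, h₁, hr]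

theorem gen₁_zpow_mul_rootT_zpow_eq_one_iff (hb : 0 < b) (hw : IsPrimitiveRoot w (4 * b))
    (a : ℤ) {c : ℤ} (hc : Odd c) (d m n : ℤ) :
    gen₁ w a b ^ m * rootT w b c d ^ n = 1 ↔
      ((4 * b : ℕ) : ℤ) ∣ m ∧ ((4 : ℕ) : ℤ) ∣ n := by
  constructor
  · rw [gen₁_zpow_mul_rootT_zpow, diagPow_eq_one_iff hw]
    push_cast
    intro h
    have hcop : IsCoprime (4 : ℤ) c := (Int.isCoprime_two_left.2 hc).pow_left (m := 2)
    exact ⟨h 3, dvd_of_mul_dvd_add (by positivity) hcop (h 3) (h 1)⟩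
  · rintro ⟨⟨k, rfl⟩, ⟨l, rfl⟩⟩
    have hk : ((4 * b : ℕ) : ℤ) * k = 2 * b * (2 * k) := by push_cast; ring
    have hl : ((4 : ℕ) : ℤ) * l = 2 * (2 * l) := by push_cast; ring
    rw [hk, hl, gen₁_zpow_mul_rootT_zpow_eq_blockSign hb hw, ← blockSign_zero_zero]
    exact blockSign_congr ⟨a * k + c * l, by ring⟩ ⟨k, by ring⟩

theorem neg_one_ne_one_of_isPrimitiveRoot (hb : 0 < b) (hw : IsPrimitiveRoot w (4 * b)) :
    (-1 : R) ≠ 1 := by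
  intro h
  have hone : w ^ (2 * b : ℤ) = 1 :=
    (zpow_two_mul_eq_neg_one hb hw).trans (Units.ext (by simpa using h))
  have := Int.le_of_dvd (by positivity) ((hw.zpow_eq_one_iff_dvd _).1 hone)
  lia

theorem eq_blockSign_of_apply_self_eq_one (hb : 0 < b) (hw : IsPrimitiveRoot w (4 * b))
    {a c d : ℤ} (hdet : a * d = b * c + 1) (hc : Odd c) {g : (Matrix (Fin 4) (Fin 4) R)ˣ}
    (hg : g ∈ Subgroup.closure {gen₁ w a b, rootT w b c d}) {i j : Fin 4} (hij : i ≠ j)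
    (hi : (g : Matrix (Fin 4) (Fin 4) R) i i = 1) (hj : (g : Matrix (Fin 4) (Fin 4) R) j j = 1) :
    g = 1 ∨ g = blockSign R 1 0 ∨ g = blockSign R 0 1 := by
  obtain ⟨m, n, rfl⟩ := (mem_closure_pair_iff_of_commute (commute_gen₁_rootT w a b c d)).1 hg
  have hdvd := hi
  have hdvd' := hj
  rw [gen₁_zpow_mul_rootT_zpow, diagPow_apply_self_eq_one_iff hw] at hdvd hdvd'
  push_cast at hdvd hdvd'
  obtain ⟨⟨p, rfl⟩, ⟨q, rfl⟩⟩ :=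
    two_mul_dvd_and_two_dvd_of_dvd_wordExponents (by positivity) hdet hc hij hdvd hdvd'
  rw [gen₁_zpow_mul_rootT_zpow_eq_blockSign hb hw] at hi ⊢
  rcases Int.even_or_odd (a * p + c * q) with hs | hs <;> rcases Int.even_or_odd p with hp | hp
  · exact Or.inl (blockSign_zero_zero (R := R) ▸ blockSign_congr (by simpa) (by simpa))
  · exact Or.inr (Or.inr (blockSign_congr (by simpa) (hp.sub_odd odd_one)))
  · exact Or.inr (Or.inl (blockSign_congr (hs.sub_odd odd_one) (by simpa)))
  · refine absurd ?_ (neg_one_ne_one_of_isPrimitiveRoot hb hw)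
    rw [coe_blockSign, hs.neg_one_zpow, hp.neg_one_zpow] at hi
    fin_cases i <;> simpa using hi

theorem setOf_two_diagonal_entries_eq_one (hb : 0 < b) (hw : IsPrimitiveRoot w (4 * b))
    {a c d : ℤ} (hdet : a * d = b * c + 1) (hc : Odd c) :
    {x : Matrix (Fin 4) (Fin 4) R | ∃ g ∈ Subgroup.closure {gen₁ w a b, rootT w b c d}, g ≠ 1 ∧
        (∃ i j : Fin 4, i ≠ j ∧ (g : Matrix (Fin 4) (Fin 4) R) i i = 1 ∧
          (g : Matrix (Fin 4) (Fin 4) R) j j = 1) ∧ (g : Matrix (Fin 4) (Fin 4) R) = x} =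
      {Matrix.diagonal ![-1, -1, 1, 1], Matrix.diagonal ![1, 1, -1, -1]} := by
  have hneg := neg_one_ne_one_of_isPrimitiveRoot hb hw
  rw [← coe_blockSign_one_zero, ← coe_blockSign_zero_one]
  ext x
  constructor
  · rintro ⟨g, hg, hne, ⟨i, j, hij, hi, hj⟩, rfl⟩
    rcases (eq_blockSign_of_apply_self_eq_one hb hw hdet hc hg hij hi hj).resolve_left hne with
      rfl | rfl <;> simp
  · have hT : blockSign R 1 0 ∈ Subgroup.closure {gen₁ w a b, rootT w b c d} :=
      rootT_sq hb hw hc d ▸ pow_mem (Subgroup.subset_closure (by simp)) 2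
    have hT' : blockSign R 0 1 ∈ Subgroup.closure {gen₁ w a b, rootT w b c d} :=
      (mem_closure_pair_iff_of_commute (commute_gen₁_rootT w a b c d)).2
        ⟨_, _, gen₁_zpow_mul_rootT_zpow_eq_blockSign_zero_one hb hw hc a d⟩
    rintro (rfl | rfl)
    · refine ⟨_, hT, fun h => hneg ?_, ⟨2, 3, by decide, by simp [coe_blockSign],
        by simp [coe_blockSign]⟩, rfl⟩
      simpa [coe_blockSign] using congrArg (fun g : (Matrix _ _ R)ˣ => g.1 0 0) h
    · refine ⟨_, hT', fun h => hneg ?_, ⟨0, 1, by decide, by simp [coe_blockSign],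
        by simp [coe_blockSign]⟩, rfl⟩
      simpa [coe_blockSign] using congrArg (fun g : (Matrix _ _ R)ˣ => g.1 2 2) h

end Generators

theorem stmt_17_general {R : Type*} [CommRing R] [NoZeroDivisors R] {a b c d : ℕ} (hb : 0 < b)
    (hdet : a * d = b * c + 1) (hcodd : Odd c) {ω : R} (hω : IsPrimitiveRoot ω (4 * b))
    {S₁ S₂ S₃ S₄ : (Matrix (Fin 4) (Fin 4) R)ˣ}
    (hS₁ : (S₁ : Matrix (Fin 4) (Fin 4) R) = Matrix.diagonal ![-ω ^ a, ω ^ a, ω, ω])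
    (hS₂ : (S₂ : Matrix (Fin 4) (Fin 4) R) = Matrix.diagonal ![ω ^ a, -ω ^ a, ω, ω])
    (hS₃ : (S₃ : Matrix (Fin 4) (Fin 4) R) = Matrix.diagonal ![ω, ω, -ω ^ d, ω ^ d])
    (hS₄ : (S₄ : Matrix (Fin 4) (Fin 4) R) = Matrix.diagonal ![ω, ω, ω ^ d, -ω ^ d]) :
    ((S₁ ^ d * S₃⁻¹) ^ 2 = S₁ * S₂⁻¹) ∧
    (∃ φ : Multiplicative (ZMod (4 * b)) × Multiplicative (ZMod 4) ≃*
        (Subgroup.closure {S₁, S₂, S₃, S₄} : Subgroup (Matrix (Fin 4) (Fin 4) R)ˣ),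
      ((φ (Multiplicative.ofAdd 1, 1) : (Matrix (Fin 4) (Fin 4) R)ˣ) = S₁) ∧
      ((φ (1, Multiplicative.ofAdd 1) : (Matrix (Fin 4) (Fin 4) R)ˣ) = S₁ ^ d * S₃⁻¹)) ∧
    ({m : Matrix (Fin 4) (Fin 4) R | ∃ g ∈ Subgroup.closure {S₁, S₂, S₃, S₄}, g ≠ 1 ∧
        (∃ i j : Fin 4, i ≠ j ∧ (g : Matrix (Fin 4) (Fin 4) R) i i = 1 ∧
          (g : Matrix (Fin 4) (Fin 4) R) j j = 1) ∧ (g : Matrix (Fin 4) (Fin 4) R) = m} =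
      {Matrix.diagonal ![-1, -1, 1, 1], Matrix.diagonal ![1, 1, -1, -1]}) := by
  obtain ⟨w, rfl⟩ := hω.isUnit (by positivity)
  have hw : IsPrimitiveRoot w (4 * b) := IsPrimitiveRoot.coe_units_iff.1 hω
  have hneg := zpow_two_mul_eq_neg_one hb hw
  obtain rfl : S₁ = gen₁ w a b := Units.ext (hS₁.trans (coe_gen₁ hneg a).symm)
  obtain rfl : S₂ = gen₂ w a b := Units.ext (hS₂.trans (coe_gen₂ hneg a).symm)
  obtain rfl : S₃ = gen₃ w b d := Units.ext (hS₃.trans (coe_gen₃ hneg d).symm)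
  obtain rfl : S₄ = gen₄ w b d := Units.ext (hS₄.trans (coe_gen₄ hneg d).symm)
  have hdet' : (a * d : ℤ) = b * c + 1 := mod_cast hdet
  have hc : Odd (c : ℤ) := mod_cast hcodd
  have hroot : gen₁ w a b ^ d * (gen₃ w b d)⁻¹ = rootT w b c d :=
    mod_cast gen₁_zpow_mul_gen₃_inv hdet' hw
  rw [hroot, gen₁_mul_gen₂_inv hb hw, closure_generators_eq hb hw hdet' hc]
  exact ⟨rootT_sq hb hw hc d,
    exists_mulEquiv_closure_pair (commute_gen₁_rootT w a b c d)
      (gen₁_zpow_mul_rootT_zpow_eq_one_iff hb hw a hc d),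
    setOf_two_diagonal_entries_eq_one hb hw hdet' hc⟩

theorem stmt_17 (a b c d : ℕ) (ha : 0 < a) (hb : 0 < b) (hc : 0 < c) (hd : 0 < d)
    (hdet : a * d = b * c + 1) (hcodd : Odd c)
    (ω : ℂ) (hω : IsPrimitiveRoot ω (4 * b))
    (S₁ S₂ S₃ S₄ : (Matrix (Fin 4) (Fin 4) ℂ)ˣ)
    (hS₁ : (S₁ : Matrix (Fin 4) (Fin 4) ℂ) = Matrix.diagonal ![-ω ^ a, ω ^ a, ω, ω])
    (hS₂ : (S₂ : Matrix (Fin 4) (Fin 4) ℂ) = Matrix.diagonal ![ω ^ a, -ω ^ a, ω, ω])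
    (hS₃ : (S₃ : Matrix (Fin 4) (Fin 4) ℂ) = Matrix.diagonal ![ω, ω, -ω ^ d, ω ^ d])
    (hS₄ : (S₄ : Matrix (Fin 4) (Fin 4) ℂ) = Matrix.diagonal ![ω, ω, ω ^ d, -ω ^ d]) :
    ((S₁ ^ d * S₃⁻¹) ^ 2 = S₁ * S₂⁻¹) ∧
    (∃ φ : Multiplicative (ZMod (4 * b)) × Multiplicative (ZMod 4) ≃*
        (Subgroup.closure {S₁, S₂, S₃, S₄} : Subgroup (Matrix (Fin 4) (Fin 4) ℂ)ˣ),
      ((φ (Multiplicative.ofAdd 1, 1) : (Matrix (Fin 4) (Fin 4) ℂ)ˣ) = S₁) ∧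
      ((φ (1, Multiplicative.ofAdd 1) : (Matrix (Fin 4) (Fin 4) ℂ)ˣ) = S₁ ^ d * S₃⁻¹)) ∧
    ({m : Matrix (Fin 4) (Fin 4) ℂ | ∃ g ∈ Subgroup.closure {S₁, S₂, S₃, S₄}, g ≠ 1 ∧
        (∃ i j : Fin 4, i ≠ j ∧ (g : Matrix (Fin 4) (Fin 4) ℂ) i i = 1 ∧
          (g : Matrix (Fin 4) (Fin 4) ℂ) j j = 1) ∧ (g : Matrix (Fin 4) (Fin 4) ℂ) = m} =
      {Matrix.diagonal ![-1, -1, 1, 1], Matrix.diagonal ![1, 1, -1, -1]}) := by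
  exact stmt_17_general hb hdet hcodd hω hS₁ hS₂ hS₃ hS₄
end

section
/- The set X is invariant under G: for every g ∈ G and every point p = (x, y, u, v) ∈ X, the point g·p (obtained by multiplying each coordinate of p by the corresponding diagonal entry of g) again lies in X. -/
/-- The complete intersection cusp `X ⊆ ℂ⁴`: points `(x,y,u,v)` with
`x² + y² = u^α v^β` and `u² + v² = x^γ y^δ`. -/
def cuspX (α β γ δ : ℕ) : Set (Fin 4 → ℂ) :=
  {p | p 0 ^ 2 + p 1 ^ 2 = p 2 ^ α * p 3 ^ β ∧ p 2 ^ 2 + p 3 ^ 2 = p 0 ^ γ * p 1 ^ δ}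

/-!
A diagonal matrix preserves `X` as soon as each of the two defining equations is homogeneous for it,
that is, as soon as it multiplies all three monomials of an equation by the same factor. Such
matrices form a group, so only the generators matter. For `diag(ε₁ω^a, ε₂ω^a, ω, ω)` with signs
`ε₁, ε₂`, the first equation scales by `ω^(2a) = ω^(α + β)`; in the second one `u²` and `v²` scale
by `ω²`, while `x^γ y^δ` scales by `ε₁^γ ε₂^δ ω^(2ad)`. Since `ω^(2b) = -1`, we have
`ω^(2ad) = ω^(2bc + 2) = (-1)^c ω²`, so the second equation is homogeneous when
`ε₁^γ ε₂^δ = (-1)^c`. The generators `S₃` and `S₄` follow by exchanging `(x, y)` with `(u, v)`.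
-/

/-- The points of `X` with coordinates in an arbitrary commutative semiring `R`; `cusp ℂ` unfolds
to `cuspX`. -/
def cusp (R : Type*) [CommSemiring R] (α β γ δ : ℕ) : Set (Fin 4 → R) :=
  {p | p 0 ^ 2 + p 1 ^ 2 = p 2 ^ α * p 3 ^ β ∧ p 2 ^ 2 + p 3 ^ 2 = p 0 ^ γ * p 1 ^ δ}

/-- The inclusion of the diagonal torus, given by its invertible diagonal entries, into the general
linear group. -/
def diagonalUnits (n R : Type*) [Fintype n] [DecidableEq n] [Semiring R] :
    (n → Rˣ) →* (Matrix n n R)ˣ :=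
  (Units.map (Matrix.diagonalRingHom n R).toMonoidHom).comp MulEquiv.piUnits.symm.toMonoidHom

/-- The coordinate scalings for which both equations of the cusp are homogeneous, as a subgroup of
the torus `M⁴`: the three monomials of each equation are multiplied by the same factor. The scalars
may form any commutative group `M`; for the action on `cusp R` it is `Rˣ`. -/
def cuspTorus (M : Type*) [CommGroup M] (α β γ δ : ℕ) : Subgroup (Fin 4 → M) where
  carrier := {t | (t 0 ^ 2 = t 2 ^ α * t 3 ^ β ∧ t 1 ^ 2 = t 2 ^ α * t 3 ^ β) ∧
    (t 2 ^ 2 = t 0 ^ γ * t 1 ^ δ ∧ t 3 ^ 2 = t 0 ^ γ * t 1 ^ δ)}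
  one_mem' := by simp
  mul_mem' := by
    rintro s t ⟨⟨hs₀, hs₁⟩, hs₂, hs₃⟩ ⟨⟨ht₀, ht₁⟩, ht₂, ht₃⟩
    simp only [Set.mem_ofPred_eq, Pi.mul_apply, mul_pow (s _) (t _), hs₀, hs₁, hs₂, hs₃,
      ht₀, ht₁, ht₂, ht₃, mul_mul_mul_comm, and_self]
  inv_mem' := by
    rintro t ⟨⟨ht₀, ht₁⟩, ht₂, ht₃⟩
    simp only [Set.mem_ofPred_eq, Pi.inv_apply, inv_pow, ht₀, ht₁, ht₂, ht₃, mul_inv, and_self]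

section Diagonal

variable {n R : Type*} [Fintype n] [DecidableEq n] [Semiring R]

@[simp]
theorem val_diagonalUnits (t : n → Rˣ) :
    (diagonalUnits n R t : Matrix n n R) = Matrix.diagonal (Units.val ∘ t) :=
  rfl

theorem mem_map_diagonalUnits {H : Subgroup (n → Rˣ)} {S : (Matrix n n R)ˣ} {t : n → Rˣ}
    (ht : t ∈ H) (hS : (S : Matrix n n R) = Matrix.diagonal (Units.val ∘ t)) :
    S ∈ H.map (diagonalUnits n R) :=
  ⟨t, ht, Units.ext hS.symm⟩

end Diagonal

theorem mul_mem_cusp {R : Type*} [CommSemiring R] {α β γ δ : ℕ} {t : Fin 4 → Rˣ}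
    (ht : t ∈ cuspTorus Rˣ α β γ δ) {p : Fin 4 → R} (hp : p ∈ cusp R α β γ δ) :
    (fun i => t i * p i) ∈ cusp R α β γ δ := by
  obtain ⟨⟨h₀, h₁⟩, h₂, h₃⟩ := ht
  obtain ⟨hxy, huv⟩ := hp
  simp only [Units.ext_iff, Units.val_mul, Units.val_pow_eq_pow_val] at h₀ h₁ h₂ h₃
  constructor
  · simp only [mul_pow, h₀, h₁, ← mul_add, hxy, mul_mul_mul_comm]
  · simp only [mul_pow, h₂, h₃, ← mul_add, huv, mul_mul_mul_comm]

theorem cuspTorus_swap {M : Type*} [CommGroup M] {α β γ δ : ℕ} {x y u v : M}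
    (h : ![x, y, u, v] ∈ cuspTorus M α β γ δ) : ![u, v, x, y] ∈ cuspTorus M γ δ α β :=
  And.symm h

theorem neg_one_pow_mul_pow_two_mul {M : Type*} [CommMonoid M] [HasDistribNeg M]
    {ω : M} {a b c d : ℕ} (hω : ω ^ (2 * b) = -1) (hdet : a * d = b * c + 1) :
    (-1) ^ c * ω ^ (2 * (a * d)) = ω ^ 2 :=
  calc (-1) ^ c * ω ^ (2 * (a * d)) = (-1) ^ c * (ω ^ (2 * b)) ^ c * ω ^ 2 := by
        rw [hdet, mul_add, ← mul_assoc, pow_add, pow_mul, mul_one, mul_assoc]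
    _ = ω ^ 2 := by rw [hω, ← mul_pow, neg_one_mul, neg_neg, one_pow, one_mul]

section Generators

variable {M : Type*} [CommGroup M] [HasDistribNeg M] {ω : M} {a b c d α β γ δ : ℕ}

theorem signed_pow_mem_cuspTorus {ε₁ ε₂ : M} (hω : ω ^ (2 * b) = -1)
    (hdet : a * d = b * c + 1) (hαβ : α + β = 2 * a) (hγδ : γ + δ = 2 * d)
    (hε₁ : ε₁ ^ 2 = 1) (hε₂ : ε₂ ^ 2 = 1) (hε : ε₁ ^ γ * ε₂ ^ δ = (-1) ^ c) :
    ![ε₁ * ω ^ a, ε₂ * ω ^ a, ω, ω] ∈ cuspTorus M α β γ δ := by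
  have first_eq {ε : M} (hsq : ε ^ 2 = 1) : (ε * ω ^ a) ^ 2 = ω ^ α * ω ^ β := by
    rw [mul_pow, hsq, one_mul, ← pow_mul, mul_comm a 2, ← hαβ, pow_add]
  have second_eq : ω ^ 2 = (ε₁ * ω ^ a) ^ γ * (ε₂ * ω ^ a) ^ δ :=
    calc ω ^ 2 = (-1) ^ c * ω ^ (2 * (a * d)) := (neg_one_pow_mul_pow_two_mul hω hdet).symm
      _ = (ε₁ ^ γ * ε₂ ^ δ) * ((ω ^ a) ^ γ * (ω ^ a) ^ δ) := by
        rw [hε, ← pow_add, hγδ, ← pow_mul, mul_left_comm]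
      _ = (ε₁ * ω ^ a) ^ γ * (ε₂ * ω ^ a) ^ δ := by
        rw [mul_mul_mul_comm, ← mul_pow, ← mul_pow]
  exact ⟨⟨first_eq hε₁, first_eq hε₂⟩, second_eq, second_eq⟩

theorem neg_left_mem_cuspTorus (hω : ω ^ (2 * b) = -1) (hdet : a * d = b * c + 1)
    (hαβ : α + β = 2 * a) (hγδ : γ + δ = 2 * d) (hγ : γ ≡ c [MOD 2]) :
    ![-ω ^ a, ω ^ a, ω, ω] ∈ cuspTorus M α β γ δ := by
  have hε : (-1 : M) ^ γ * 1 ^ δ = (-1) ^ c := by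
    rw [one_pow, mul_one, pow_eq_pow_of_modEq hγ neg_one_sq]
  simpa only [neg_one_mul, one_mul] using
    signed_pow_mem_cuspTorus hω hdet hαβ hγδ neg_one_sq (one_pow 2) hε

theorem neg_right_mem_cuspTorus (hω : ω ^ (2 * b) = -1) (hdet : a * d = b * c + 1)
    (hαβ : α + β = 2 * a) (hγδ : γ + δ = 2 * d) (hδ : δ ≡ c [MOD 2]) :
    ![ω ^ a, -ω ^ a, ω, ω] ∈ cuspTorus M α β γ δ := by
  have hε : (1 : M) ^ γ * (-1) ^ δ = (-1) ^ c := by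
    rw [one_pow, one_mul, pow_eq_pow_of_modEq hδ neg_one_sq]
  simpa only [neg_one_mul, one_mul] using
    signed_pow_mem_cuspTorus hω hdet hαβ hγδ (one_pow 2) neg_one_sq hε

end Generators

theorem stmt_18_general {R : Type*} [CommRing R] {a b c d : ℕ} (hdet : a * d = b * c + 1)
    {ω : R} (hω : ω ^ (2 * b) = -1) {S₁ S₂ S₃ S₄ : (Matrix (Fin 4) (Fin 4) R)ˣ}
    (hS₁ : (S₁ : Matrix (Fin 4) (Fin 4) R) = Matrix.diagonal ![-ω ^ a, ω ^ a, ω, ω])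
    (hS₂ : (S₂ : Matrix (Fin 4) (Fin 4) R) = Matrix.diagonal ![ω ^ a, -ω ^ a, ω, ω])
    (hS₃ : (S₃ : Matrix (Fin 4) (Fin 4) R) = Matrix.diagonal ![ω, ω, -ω ^ d, ω ^ d])
    (hS₄ : (S₄ : Matrix (Fin 4) (Fin 4) R) = Matrix.diagonal ![ω, ω, ω ^ d, -ω ^ d])
    {α β γ δ : ℕ} (hαβ : α + β = 2 * a) (hγδ : γ + δ = 2 * d)
    (hα : α ≡ c [MOD 2]) (hβ : β ≡ c [MOD 2]) (hγ : γ ≡ c [MOD 2]) (hδ : δ ≡ c [MOD 2]) :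
    ∀ g ∈ Subgroup.closure {S₁, S₂, S₃, S₄}, ∀ p ∈ cusp R α β γ δ,
      (fun i => (g : Matrix (Fin 4) (Fin 4) R) i i * p i) ∈ cusp R α β γ δ := by
  have hω_unit : IsUnit ω :=
    Pi.isUnit_iff.mp (Matrix.isUnit_diagonal.mp (hS₁ ▸ S₁.isUnit)) 2
  lift ω to Rˣ using hω_unit
  replace hω : ω ^ (2 * b) = -1 := Units.ext (by simpa using hω)
  have hdet' : d * a = b * c + 1 := by rw [mul_comm, hdet]
  have hG : Subgroup.closure {S₁, S₂, S₃, S₄} ≤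
      (cuspTorus Rˣ α β γ δ).map (diagonalUnits (Fin 4) R) := by
    rw [Subgroup.closure_le]
    rintro g (rfl | rfl | rfl | rfl)
    · exact mem_map_diagonalUnits (neg_left_mem_cuspTorus hω hdet hαβ hγδ hγ)
        (by simp [hS₁, Fin.forall_fin_succ])
    · exact mem_map_diagonalUnits (neg_right_mem_cuspTorus hω hdet hαβ hγδ hδ)
        (by simp [hS₂, Fin.forall_fin_succ])
    · exact mem_map_diagonalUnits
        (cuspTorus_swap (neg_left_mem_cuspTorus hω hdet' hγδ hαβ hα))
        (by simp [hS₃, Fin.forall_fin_succ])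
    · exact mem_map_diagonalUnits
        (cuspTorus_swap (neg_right_mem_cuspTorus hω hdet' hγδ hαβ hβ))
        (by simp [hS₄, Fin.forall_fin_succ])
  intro g hg p hp
  obtain ⟨t, ht, rfl⟩ := hG hg
  simpa using mul_mem_cusp ht hp

theorem stmt_18 (a b c d : ℕ) (ha : 0 < a) (hb : 0 < b) (hc : 0 < c) (hd : 0 < d)
    (hdet : a * d = b * c + 1)
    (ω : ℂ) (hω : IsPrimitiveRoot ω (4 * b))
    (S₁ S₂ S₃ S₄ : (Matrix (Fin 4) (Fin 4) ℂ)ˣ)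
    (hS₁ : (S₁ : Matrix (Fin 4) (Fin 4) ℂ) = Matrix.diagonal ![-ω ^ a, ω ^ a, ω, ω])
    (hS₂ : (S₂ : Matrix (Fin 4) (Fin 4) ℂ) = Matrix.diagonal ![ω ^ a, -ω ^ a, ω, ω])
    (hS₃ : (S₃ : Matrix (Fin 4) (Fin 4) ℂ) = Matrix.diagonal ![ω, ω, -ω ^ d, ω ^ d])
    (hS₄ : (S₄ : Matrix (Fin 4) (Fin 4) ℂ) = Matrix.diagonal ![ω, ω, ω ^ d, -ω ^ d])
    (α β γ δ : ℕ) (hαβ : α + β = 2 * a) (hγδ : γ + δ = 2 * d)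
    (hpar : α % 2 = c % 2 ∧ β % 2 = c % 2 ∧ γ % 2 = c % 2 ∧ δ % 2 = c % 2) :
    ∀ g ∈ Subgroup.closure {S₁, S₂, S₃, S₄}, ∀ p ∈ cuspX α β γ δ,
      (fun i => (g : Matrix (Fin 4) (Fin 4) ℂ) i i * p i) ∈ cuspX α β γ δ := by
  have hω₂ : IsPrimitiveRoot (ω ^ (2 * b)) 2 := hω.pow (by lia) (by ring)
  exact stmt_18_general hdet hω₂.eq_neg_one_of_two_right hS₁ hS₂ hS₃ hS₄ hαβ hγδ
    hpar.1 hpar.2.1 hpar.2.2.1 hpar.2.2.2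
end
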